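/- In P_n one has the relations: P_n·P_n ⊆ D_n, A_n·A_n = 0, D_n·D_n = 0, D_n·P_n ⊆ C_n, P_n·A_n ⊆ C_n, P_n·C_n ⊆ span{d_{ij}, e_{ij}}, C_n·P_n = 0, and P_n·(span{d_{ij}, e_{ij}}) ⊆ C_n. -/

import Mathlib

inductive PBasis (n : ℕ) : Type
  | a : Fin n → Fin n → PBasis n
  | b : Fin n → Fin n → PBasis n
  | c : Fin n → PBasis n
  | d : Fin n → Fin n → PBasis n
  | e : Fin n → Fin n → PBasis n
  deriving DecidableEq

abbrev Pn (F : Type*) [Field F] (n : ℕ) : Type _ := PBasis n →₀ F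

open PBasis in
noncomputable def mulB (F : Type*) [Field F] {n : ℕ} : PBasis n → PBasis n → Pn F n
  | a i j, c k => if k = i then Finsupp.single (d i j) 1 else 0
  | b i j, c k => if k = i then Finsupp.single (e i j) 1 else 0
  | a i j, e k l => if i = k ∧ j = l then Finsupp.single (c j) 1 else 0
  | e k l, a i j => if i = k ∧ j = l then Finsupp.single (c j) 1 else 0
  | b i j, d k l => if i = k ∧ j = l then -Finsupp.single (c j) 1 else 0
  | d k l, b i j => if i = k ∧ j = l then -Finsupp.single (c j) 1 else 0
  | _, _ => 0

noncomputable def mulLin (F : Type*) [Field F] {n : ℕ} :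
    Pn F n →ₗ[F] Pn F n →ₗ[F] Pn F n :=
  Finsupp.lift (Pn F n →ₗ[F] Pn F n) F (PBasis n)
    (fun u => Finsupp.lift (Pn F n) F (PBasis n) (fun v => mulB F u v))

noncomputable instance (F : Type*) [Field F] (n : ℕ) : Mul (Pn F n) :=
  ⟨fun x y => mulLin F x y⟩

noncomputable def Cspan (F : Type*) [Field F] (n : ℕ) : Submodule F (Pn F n) :=
  Submodule.span F (Set.range fun i => (Finsupp.single (PBasis.c i) 1 : Pn F n))

noncomputable def Aspan (F : Type*) [Field F] (n : ℕ) : Submodule F (Pn F n) :=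
  Submodule.span F {x : Pn F n | ∃ i j,
    x = Finsupp.single (PBasis.a i j) 1 ∨ x = Finsupp.single (PBasis.b i j) 1}

noncomputable def Cbarspan (F : Type*) [Field F] (n : ℕ) : Submodule F (Pn F n) :=
  Submodule.span F {x : Pn F n | ∃ i j,
    x = Finsupp.single (PBasis.d i j) 1 ∨ x = Finsupp.single (PBasis.e i j) 1}

noncomputable def Dspan (F : Type*) [Field F] (n : ℕ) : Submodule F (Pn F n) :=
  Submodule.span F {x : Pn F n | (∃ i, x = Finsupp.single (PBasis.c i) 1) ∨
    ∃ i j, x = Finsupp.single (PBasis.d i j) 1 ∨ x = Finsupp.single (PBasis.e i j) 1}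

theorem mulLin_single_single (F : Type*) [Field F] {n : ℕ} (u v : PBasis n) :
    mulLin F (Finsupp.single u 1) (Finsupp.single v 1) = mulB F u v := by
  simp [mulLin]

/-- A product of two spans of basis vectors lies in a submodule as soon as the products of the
basis vectors do. -/
theorem Pn.mul_mem_of_span (F : Type*) [Field F] {n : ℕ} {s t : Set (Pn F n)}
    {M : Submodule F (Pn F n)} (h : ∀ x ∈ s, ∀ y ∈ t, mulLin F x y ∈ M) {x y : Pn F n}
    (hx : x ∈ Submodule.span F s) (hy : y ∈ Submodule.span F t) : x * y ∈ M :=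
  Submodule.map₂_le.1 ((Submodule.map₂_span_span F (mulLin F) s t).trans_le
    (Submodule.span_le.2 (Set.image2_subset_iff.2 h))) x hx y hy

theorem Pn.mem_span_basis (F : Type*) [Field F] {n : ℕ} (x : Pn F n) :
    x ∈ Submodule.span F (Set.range fun u : PBasis n => (Finsupp.single u 1 : Pn F n)) := by
  have h := (Finsupp.basisSingleOne (R := F) (ι := PBasis n)).mem_span x
  rwa [Finsupp.coe_basisSingleOne] at h

theorem single_c_mem_Cspan (F : Type*) [Field F] {n : ℕ} (i : Fin n) :
    (Finsupp.single (PBasis.c i) 1 : Pn F n) ∈ Cspan F n :=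
  Submodule.subset_span ⟨i, rfl⟩

theorem single_d_mem_Cbarspan (F : Type*) [Field F] {n : ℕ} (i j : Fin n) :
    (Finsupp.single (PBasis.d i j) 1 : Pn F n) ∈ Cbarspan F n :=
  Submodule.subset_span ⟨i, j, Or.inl rfl⟩

theorem single_e_mem_Cbarspan (F : Type*) [Field F] {n : ℕ} (i j : Fin n) :
    (Finsupp.single (PBasis.e i j) 1 : Pn F n) ∈ Cbarspan F n :=
  Submodule.subset_span ⟨i, j, Or.inr rfl⟩

theorem Cspan_le_Dspan (F : Type*) [Field F] (n : ℕ) : Cspan F n ≤ Dspan F n :=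
  Submodule.span_mono (by rintro _ ⟨i, rfl⟩; exact Or.inl ⟨i, rfl⟩)

theorem Cbarspan_le_Dspan (F : Type*) [Field F] (n : ℕ) : Cbarspan F n ≤ Dspan F n :=
  Submodule.span_mono fun _ h => Or.inr h

theorem mulB_mem_Dspan (F : Type*) [Field F] {n : ℕ} (u v : PBasis n) :
    mulB F u v ∈ Dspan F n := by
  have hc := fun i => Cspan_le_Dspan F n (single_c_mem_Cspan F i)
  have hd := fun i j => Cbarspan_le_Dspan F n (single_d_mem_Cbarspan F i j)
  have he := fun i j => Cbarspan_le_Dspan F n (single_e_mem_Cbarspan F i j)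
  cases u <;> cases v <;> simp only [mulB] <;> (try split_ifs) <;> simp [hc, hd, he]

theorem stmt (F : Type*) [Field F] (n : ℕ) :
    (∀ x y : Pn F n, x * y ∈ Dspan F n) ∧
    (∀ x y : Pn F n, x ∈ Aspan F n → y ∈ Aspan F n → x * y = 0) ∧
    (∀ x y : Pn F n, x ∈ Dspan F n → y ∈ Dspan F n → x * y = 0) ∧
    (∀ x y : Pn F n, x ∈ Dspan F n → x * y ∈ Cspan F n) ∧
    (∀ x y : Pn F n, y ∈ Aspan F n → x * y ∈ Cspan F n) ∧
    (∀ x y : Pn F n, y ∈ Cspan F n → x * y ∈ Cbarspan F n) ∧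
    (∀ x y : Pn F n, x ∈ Cspan F n → x * y = 0) ∧
    (∀ x y : Pn F n, y ∈ Cbarspan F n → x * y ∈ Cspan F n) := by
  have hc := single_c_mem_Cspan F (n := n)
  have hd := single_d_mem_Cbarspan F (n := n)
  have he := single_e_mem_Cbarspan F (n := n)
  refine ⟨fun x y => ?_, fun x y hx hy => ?_, fun x y hx hy => ?_, fun x y hx => ?_,
    fun x y hy => ?_, fun x y hy => ?_, fun x y hx => ?_, fun x y hy => ?_⟩
  · refine Pn.mul_mem_of_span F ?_ (Pn.mem_span_basis F x) (Pn.mem_span_basis F y)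
    rintro _ ⟨u, rfl⟩ _ ⟨v, rfl⟩
    simpa only [mulLin_single_single] using mulB_mem_Dspan F u v
  · refine (Submodule.mem_bot F).1 (Pn.mul_mem_of_span F ?_ hx hy)
    rintro _ ⟨i, j, rfl | rfl⟩ _ ⟨k, l, rfl | rfl⟩ <;> simp [mulLin_single_single, mulB]
  · refine (Submodule.mem_bot F).1 (Pn.mul_mem_of_span F ?_ hx hy)
    rintro _ (⟨i, rfl⟩ | ⟨i, j, rfl | rfl⟩) _ (⟨k, rfl⟩ | ⟨k, l, rfl | rfl⟩) <;>
      simp [mulLin_single_single, mulB]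
  · refine Pn.mul_mem_of_span F ?_ hx (Pn.mem_span_basis F y)
    rintro _ (⟨i, rfl⟩ | ⟨i, j, rfl | rfl⟩) _ ⟨v, rfl⟩ <;> cases v <;>
      simp only [mulLin_single_single, mulB] <;> (try split_ifs) <;> simp [hc]
  · refine Pn.mul_mem_of_span F ?_ (Pn.mem_span_basis F x) hy
    rintro _ ⟨u, rfl⟩ _ ⟨k, l, rfl | rfl⟩ <;> cases u <;>
      simp only [mulLin_single_single, mulB] <;> (try split_ifs) <;> simp [hc]
  · refine Pn.mul_mem_of_span F ?_ (Pn.mem_span_basis F x) hy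
    rintro _ ⟨u, rfl⟩ _ ⟨k, rfl⟩
    cases u <;> simp only [mulLin_single_single, mulB] <;> (try split_ifs) <;> simp [hd, he]
  · refine (Submodule.mem_bot F).1 (Pn.mul_mem_of_span F ?_ hx (Pn.mem_span_basis F y))
    rintro _ ⟨i, rfl⟩ _ ⟨v, rfl⟩
    cases v <;> simp [mulLin_single_single, mulB]
  · refine Pn.mul_mem_of_span F ?_ (Pn.mem_span_basis F x) hy
    rintro _ ⟨u, rfl⟩ _ ⟨k, l, rfl | rfl⟩ <;> cases u <;>
      simp only [mulLin_single_single, mulB] <;> (try split_ifs) <;> simp [hc]
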